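/- arXiv:1503.01673 — 5 statements merged into one kernel-verified Lean document; each statement's English description precedes it below -/
import Mathlib

section
/- Let A and B be real symmetric positive semidefinite n×n matrices. Then det(I + A + B) ≤ det(I + A) · det(I + B). Consequently, if κ = Σ_{j=1}^M κ^{(j)} is an additive kernel with each κ^{(j)} symmetric positive semidefinite, then for any points x_1, …, x_T and any η > 0, the information gain of κ at these points is at most the sum over j of the information gains of the κ^{(j)} at the same points; in particular γ_T(κ) ≤ Σ_{j=1}^M γ_T(κ^{(j)}). -/
open Matrix

/-- The information gain of the points `x_1, …, x_T` for kernel `κ` at noise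
level `η`: `(1/2) log det(I + η⁻² K)` where `K_{pq} = κ(x_p, x_q)`. -/
noncomputable def infoGain {X : Type*} {T : ℕ} (κ : X → X → ℝ) (η : ℝ)
    (x : Fin T → X) : ℝ :=
  (1 / 2) * Real.log
    ((1 + (η ^ 2)⁻¹ • Matrix.of fun p q => κ (x p) (x q)).det)

/-!
Factor `A = Cᴴ * C` and `B = Dᴴ * D`, and let `R` be `C` stacked on top of `D`. Then
`det (1 + A + B) = det (1 + Rᴴ * R) = det (1 + R * Rᴴ)`, and `1 + R * Rᴴ` is positive semidefinite
with diagonal blocks `1 + C * Cᴴ` and `1 + D * Dᴴ`. By Fischer's inequality its determinant is at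
most `det (1 + C * Cᴴ) * det (1 + D * Dᴴ) = det (1 + A) * det (1 + B)`. Fischer's inequality itself
holds because passing to a Schur complement subtracts a positive semidefinite matrix, which cannot
increase the determinant.
-/

section Determinant

open scoped ComplexOrder

variable {𝕜 m n ι : Type*} [RCLike 𝕜] [Fintype m] [Fintype n]

theorem exists_eq_conjTranspose_mul_self_of_posSemidef {A : Matrix n n 𝕜} (hA : A.PosSemidef) :
    ∃ C : Matrix n n 𝕜, A = Cᴴ * C := by
  classical
  open scoped MatrixOrder in
  exact CStarAlgebra.nonneg_iff_eq_star_mul_self.mp hA.nonneg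

variable [DecidableEq m] [DecidableEq n]

theorem det_one_add_eq_prod_eigenvalues {A : Matrix n n 𝕜} (hA : A.IsHermitian) :
    (1 + A).det = ∏ i, (1 + (hA.eigenvalues i : 𝕜)) := by
  conv_lhs => rw [hA.spectral_theorem, Unitary.conjStarAlgAut_apply, mul_assoc,
    det_one_add_mul_comm, mul_assoc, Unitary.coe_star_mul_self, mul_one, ← diagonal_one,
    diagonal_add, det_diagonal]
  rfl

theorem one_le_det_one_add {A : Matrix n n 𝕜} (hA : A.PosSemidef) : 1 ≤ (1 + A).det := by
  rw [det_one_add_eq_prod_eigenvalues hA.isHermitian]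
  exact Finset.one_le_prod fun i _ =>
    le_add_of_nonneg_right (RCLike.ofReal_nonneg.mpr (hA.eigenvalues_nonneg i))

theorem det_le_det_add {A B : Matrix n n 𝕜} (hA : A.PosSemidef) (hB : B.PosSemidef) :
    A.det ≤ (A + B).det := by
  by_cases hA_det : A.det = 0
  · rw [hA_det]
    exact (hA.add hB).det_nonneg
  · obtain ⟨C, rfl⟩ := exists_eq_conjTranspose_mul_self_of_posSemidef hB
    rw [det_add_mul _ _ (isUnit_iff_ne_zero.mpr hA_det)]
    exact le_mul_of_one_le_right hA.det_nonneg
      (one_le_det_one_add (hA.inv.mul_mul_conjTranspose_same C))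

/-- **Fischer's inequality**. -/
theorem det_fromBlocks_le_of_posSemidef {A : Matrix m m 𝕜} {B : Matrix m n 𝕜} {D : Matrix n n 𝕜}
    (h : (fromBlocks A B Bᴴ D).PosSemidef) : (fromBlocks A B Bᴴ D).det ≤ A.det * D.det := by
  have hA : A.PosSemidef := h.submatrix Sum.inl
  by_cases hA_det : A.det = 0
  · have h_det : (fromBlocks A B Bᴴ D).det = 0 := by
      by_contra h_ne
      have hA_pos : A.PosDef := (h.posDef_iff_det_ne_zero.mpr h_ne).submatrix Sum.inl_injective
      exact hA_pos.det_pos.ne' hA_det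
    rw [h_det, hA_det, zero_mul]
  · have hA_pos : A.PosDef := hA.posDef_iff_det_ne_zero.mpr hA_det
    let : Invertible A := hA_pos.isUnit.invertible
    have h_schur : (D - Bᴴ * A⁻¹ * B).PosSemidef := (hA_pos.fromBlocks₁₁ B D).mp h
    rw [det_fromBlocks₁₁, invOf_eq_nonsing_inv]
    refine mul_le_mul_of_nonneg_left ?_ hA.det_nonneg
    simpa only [sub_add_cancel] using
      det_le_det_add h_schur (hA.inv.conjTranspose_mul_mul_same B)

theorem det_one_add_add_le {A B : Matrix n n 𝕜} (hA : A.PosSemidef) (hB : B.PosSemidef) :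
    (1 + A + B).det ≤ (1 + A).det * (1 + B).det := by
  obtain ⟨C, rfl⟩ := exists_eq_conjTranspose_mul_self_of_posSemidef hA
  obtain ⟨D, rfl⟩ := exists_eq_conjTranspose_mul_self_of_posSemidef hB
  let R := fromRows C D
  have h_gram : Cᴴ * C + Dᴴ * D = Rᴴ * R := by
    rw [conjTranspose_fromRows_eq_fromCols_conjTranspose, fromCols_mul_fromRows]
  have h_blocks : 1 + R * Rᴴ =
      fromBlocks (1 + C * Cᴴ) (C * Dᴴ) (C * Dᴴ)ᴴ (1 + D * Dᴴ) := by
    rw [conjTranspose_fromRows_eq_fromCols_conjTranspose, fromRows_mul_fromCols, ← fromBlocks_one,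
      fromBlocks_add, zero_add, zero_add, conjTranspose_mul, conjTranspose_conjTranspose]
  have h_psd : (1 + R * Rᴴ).PosSemidef :=
    PosSemidef.one.add (posSemidef_self_mul_conjTranspose R)
  rw [add_assoc, h_gram, det_one_add_mul_comm Rᴴ, det_one_add_mul_comm Cᴴ, det_one_add_mul_comm Dᴴ,
    h_blocks]
  exact det_fromBlocks_le_of_posSemidef (h_blocks ▸ h_psd)

theorem det_one_add_sum_le {s : Finset ι} {A : ι → Matrix n n 𝕜}
    (hA : ∀ j ∈ s, (A j).PosSemidef) : (1 + ∑ j ∈ s, A j).det ≤ ∏ j ∈ s, (1 + A j).det := by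
  classical
  induction s using Finset.induction_on with
  | empty => simp
  | insert a s ha ih =>
    obtain ⟨hAa, hAs⟩ := (Finset.forall_mem_insert a s _).mp hA
    rw [Finset.sum_insert ha, Finset.prod_insert ha, ← add_assoc]
    calc (1 + A a + ∑ j ∈ s, A j).det
        ≤ (1 + A a).det * (1 + ∑ j ∈ s, A j).det :=
          det_one_add_add_le hAa (posSemidef_sum s hAs)
      _ ≤ (1 + A a).det * ∏ j ∈ s, (1 + A j).det :=
          mul_le_mul_of_nonneg_left (ih hAs) (PosSemidef.one.add hAa).det_nonneg

end Determinant

theorem infoGain_sum_le {X ι : Type*} {s : Finset ι} {κ : ι → X → X → ℝ} {T : ℕ} {x : Fin T → X}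
    (hκ : ∀ j ∈ s, (Matrix.of fun p q => κ j (x p) (x q)).PosSemidef) (η : ℝ) :
    infoGain (fun u v => ∑ j ∈ s, κ j u v) η x ≤ ∑ j ∈ s, infoGain (κ j) η x := by
  let G (j : ι) : Matrix (Fin T) (Fin T) ℝ := (η ^ 2)⁻¹ • Matrix.of fun p q => κ j (x p) (x q)
  have hG : ∀ j ∈ s, (G j).PosSemidef := fun j hj => (hκ j hj).smul (by positivity)
  have hG_det_pos : ∀ j ∈ s, 0 < (1 + G j).det := fun j hj =>
    (PosDef.one.add_posSemidef (hG j hj)).det_pos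
  have hG_sum_det_pos : 0 < (1 + ∑ j ∈ s, G j).det :=
    (PosDef.one.add_posSemidef (posSemidef_sum s hG)).det_pos
  have h_gram : (η ^ 2)⁻¹ • (Matrix.of fun p q => ∑ j ∈ s, κ j (x p) (x q)) = ∑ j ∈ s, G j := by
    ext p q
    simp [G, Matrix.sum_apply, Finset.mul_sum]
  calc infoGain (fun u v => ∑ j ∈ s, κ j u v) η x
      = 1 / 2 * Real.log (1 + ∑ j ∈ s, G j).det := by rw [infoGain, h_gram]
    _ ≤ 1 / 2 * Real.log (∏ j ∈ s, (1 + G j).det) := by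
        gcongr
        exact det_one_add_sum_le hG
    _ = ∑ j ∈ s, infoGain (κ j) η x := by
        rw [Real.log_prod fun j hj => (hG_det_pos j hj).ne', Finset.mul_sum]
        rfl

universe u v w t

open scoped ComplexOrder in
theorem stmt_3_general :
    (∀ (𝕜 : Type u) [RCLike 𝕜] (n : Type v) [Fintype n] [DecidableEq n] (A B : Matrix n n 𝕜),
      A.PosSemidef → B.PosSemidef →
      (1 + A + B).det ≤ (1 + A).det * (1 + B).det) ∧
    (∀ (X : Type w) (ι : Type t) [Fintype ι] (κ : ι → X → X → ℝ),
      (∀ (j : ι) (n : ℕ) (p : Fin n → X),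
        (Matrix.of fun s t => κ j (p s) (p t)).PosSemidef) →
      ∀ (η : ℝ), 0 < η → ∀ (T : ℕ) (x : Fin T → X),
        infoGain (fun u v => ∑ j, κ j u v) η x ≤ ∑ j, infoGain (κ j) η x) ∧
    (∀ (X : Type w) (ι : Type t) [Fintype ι] (κ : ι → X → X → ℝ),
      (∀ (j : ι) (n : ℕ) (p : Fin n → X),
        (Matrix.of fun s t => κ j (p s) (p t)).PosSemidef) →
      ∀ (η : ℝ), 0 < η → ∀ (T : ℕ) (g : ι → ℝ),
        (∀ (j : ι) (x : Fin T → X), infoGain (κ j) η x ≤ g j) →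
        ∀ x : Fin T → X,
          infoGain (fun u v => ∑ j, κ j u v) η x ≤ ∑ j, g j) := by
  refine ⟨fun 𝕜 _ n _ _ A B => det_one_add_add_le,
    fun X ι _ κ hκ η _ T x => infoGain_sum_le (fun j _ => hκ j T x) η,
    fun X ι _ κ hκ η _ T g hg x => ?_⟩
  calc infoGain (fun u v => ∑ j, κ j u v) η x
      ≤ ∑ j, infoGain (κ j) η x := infoGain_sum_le (fun j _ => hκ j T x) η
    _ ≤ ∑ j, g j := Finset.sum_le_sum fun j _ => hg j x

/-- `det(I + A + B) ≤ det(I + A) det(I + B)` for real symmetric positive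
semidefinite matrices; consequently the information gain of an additive kernel
`κ = ∑ⱼ κ⁽ʲ⁾` at any set of points is at most the sum of the information gains
of the components at the same points, and hence any upper bounds `gⱼ` on the
maximum information gains of the components sum to an upper bound on the
maximum information gain of `κ` (i.e. `γ_T(κ) ≤ ∑ⱼ γ_T(κ⁽ʲ⁾)`). -/
theorem stmt_3 :
    (∀ (n : ℕ) (A B : Matrix (Fin n) (Fin n) ℝ),
      A.PosSemidef → B.PosSemidef →
      (1 + A + B).det ≤ (1 + A).det * (1 + B).det) ∧
    (∀ (X : Type) (M : ℕ) (κ : Fin M → X → X → ℝ),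
      (∀ (j : Fin M) (n : ℕ) (p : Fin n → X),
        (Matrix.of fun s t => κ j (p s) (p t)).PosSemidef) →
      ∀ (η : ℝ), 0 < η → ∀ (T : ℕ) (x : Fin T → X),
        infoGain (fun u v => ∑ j, κ j u v) η x ≤ ∑ j, infoGain (κ j) η x) ∧
    (∀ (X : Type) (M : ℕ) (κ : Fin M → X → X → ℝ),
      (∀ (j : Fin M) (n : ℕ) (p : Fin n → X),
        (Matrix.of fun s t => κ j (p s) (p t)).PosSemidef) →
      ∀ (η : ℝ), 0 < η → ∀ (T : ℕ) (g : Fin M → ℝ),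
        (∀ (j : Fin M) (x : Fin T → X), infoGain (κ j) η x ≤ g j) →
        ∀ x : Fin T → X,
          infoGain (fun u v => ∑ j, κ j u v) η x ≤ ∑ j, g j) := by
  obtain ⟨h_det, h_gain, h_bound⟩ := stmt_3_general.{0, 0, 0, 0}
  exact ⟨fun n => h_det ℝ (Fin n), fun X M => h_gain X (Fin M), fun X M => h_bound X (Fin M)⟩
end

section
/- Let κ be a symmetric positive semidefinite kernel on X, η > 0, and x_1, …, x_T ∈ X any sequence of points. Then (1/2) log det(I_T + η^{−2} K_T) = (1/2) Σ_{t=1}^T log( 1 + η^{−2} σ_{t−1}²(x_t) ), where (K_T)_{pq} = κ(x_p, x_q) and σ_{t−1}² is the Gaussian-process posterior variance after the first t−1 points. That is, the information gain of the sequence telescopes as the sum of the log one-step predictive variance ratios. -/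
open Matrix

/-- Gaussian-process posterior variance at `z` after observing the points
`xs`, for kernel `κ` and noise level `η`:
`σ_t²(z) = κ(z,z) − k_t(z)ᵀ (K_t + η² I)⁻¹ k_t(z)`. -/
noncomputable def postVar {X : Type*} (κ : X → X → ℝ) (η : ℝ) {t : ℕ}
    (xs : Fin t → X) (z : X) : ℝ :=
  κ z z -
    (fun p => κ z (xs p)) ⬝ᵥ
      (((Matrix.of fun p q => κ (xs p) (xs q)) +
          η ^ 2 • (1 : Matrix (Fin t) (Fin t) ℝ))⁻¹ *ᵥ fun p => κ (xs p) z)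

/-! The Schur complement of `K_{t-1} + η² I` in `K_t + η² I` is `η² + σ_{t-1}²(x_t)`. These are the
pivots of Gaussian elimination on `K_T + η² I`, so their product is its determinant; multiplying
each by `η⁻²` and taking logarithms gives the sum. -/

section Pivot

variable {R : Type*} {n : ℕ}

/-- The leading principal block of order `t` of a square matrix. -/
def leadingBlock (A : Matrix (Fin n) (Fin n) R) {t : ℕ} (ht : t ≤ n) : Matrix (Fin t) (Fin t) R :=
  A.submatrix (Fin.castLE ht) (Fin.castLE ht)

theorem submatrix_finSumFinEquiv_eq_fromBlocks (A : Matrix (Fin (n + 1)) (Fin (n + 1)) R) :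
    A.submatrix (finSumFinEquiv (m := n) (n := 1)) (finSumFinEquiv (m := n) (n := 1)) =
      fromBlocks (leadingBlock A n.le_succ)
        (replicateCol (Fin 1) fun i => A i.castSucc (Fin.last n))
        (replicateRow (Fin 1) fun j => A (Fin.last n) j.castSucc)
        (of fun _ _ => A (Fin.last n) (Fin.last n)) := by
  have natAdd_eq_last (k : Fin 1) : Fin.natAdd n k = Fin.last n := by
    rw [Subsingleton.elim k 0]
    rfl
  ext (i | i) (j | j) <;> simp [leadingBlock, natAdd_eq_last] <;> rfl

variable [CommRing R]

/-- The `t`-th pivot of Gaussian elimination without row exchanges, encoded as the Schur complement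
of the leading block of order `t` in the leading block of order `t + 1`. It is meaningful when the
former is invertible. -/
noncomputable def pivot (A : Matrix (Fin n) (Fin n) R) (t : Fin n) : R :=
  A t t - (fun j => A t (Fin.castLE t.isLt.le j)) ⬝ᵥ
    ((leadingBlock A t.isLt.le)⁻¹ *ᵥ fun i => A (Fin.castLE t.isLt.le i) t)

theorem det_eq_det_leadingBlock_mul_pivot_last (A : Matrix (Fin (n + 1)) (Fin (n + 1)) R)
    (hA : IsUnit (leadingBlock A n.le_succ).det) :
    A.det = (leadingBlock A n.le_succ).det * pivot A (Fin.last n) := by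
  let _ := (leadingBlock A n.le_succ).invertibleOfIsUnitDet hA
  rw [← det_submatrix_equiv_self (finSumFinEquiv (m := n) (n := 1)),
    submatrix_finSumFinEquiv_eq_fromBlocks, det_fromBlocks₁₁, det_fin_one, invOf_eq_nonsing_inv,
    Matrix.mul_assoc]
  rfl

theorem det_eq_prod_pivot (A : Matrix (Fin n) (Fin n) R)
    (hA : ∀ t : Fin n, IsUnit (leadingBlock A t.isLt.le).det) :
    A.det = ∏ t, pivot A t := by
  induction n with
  | zero => simp
  | succ n ih =>
    rw [det_eq_det_leadingBlock_mul_pivot_last A (hA (Fin.last n)), Fin.prod_univ_castSucc,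
      ih (leadingBlock A n.le_succ) fun t => hA t.castSucc]
    rfl

end Pivot

section NoisyGram

variable {X : Type*} (κ : X → X → ℝ) (η : ℝ) {T : ℕ} (x : Fin T → X)

/-- The covariance matrix `K_T + η² I` of noisy observations at the points `x`. -/
def noisyGram : Matrix (Fin T) (Fin T) ℝ :=
  (of fun p q => κ (x p) (x q)) + η ^ 2 • 1

theorem leadingBlock_noisyGram {t : ℕ} (ht : t ≤ T) :
    leadingBlock (noisyGram κ η x) ht = noisyGram κ η (Fin.take t ht x) := by
  ext p q
  simp [leadingBlock, noisyGram, Fin.take, one_apply]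

theorem pivot_noisyGram (t : Fin T) :
    pivot (noisyGram κ η x) t = η ^ 2 + postVar κ η (Fin.take t t.isLt.le x) (x t) := by
  have castLE_ne (s : Fin t) : Fin.castLE t.isLt.le s ≠ t := Fin.ne_of_val_ne s.isLt.ne
  rw [pivot, leadingBlock_noisyGram]
  simp only [noisyGram, postVar, Fin.take, Matrix.add_apply, of_apply, Matrix.smul_apply,
    one_apply_eq, one_apply_ne (castLE_ne _), one_apply_ne (castLE_ne _).symm, smul_eq_mul,
    mul_one, mul_zero, add_zero]
  ring

variable {κ η x}

theorem one_add_inv_smul_gram (hη : η ≠ 0) :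
    1 + (η ^ 2)⁻¹ • (of fun p q => κ (x p) (x q)) = (η ^ 2)⁻¹ • noisyGram κ η x := by
  rw [noisyGram, smul_add, inv_smul_smul₀ (pow_ne_zero 2 hη), add_comm]

theorem det_one_add_inv_smul_gram (hη : η ≠ 0)
    (hdet : ∀ t : Fin T, (noisyGram κ η (Fin.take t t.isLt.le x)).det ≠ 0) :
    (1 + (η ^ 2)⁻¹ • of fun p q => κ (x p) (x q)).det =
      ∏ t : Fin T, (1 + (η ^ 2)⁻¹ * postVar κ η (Fin.take t t.isLt.le x) (x t)) := by
  have isUnit_det (t : Fin T) : IsUnit (leadingBlock (noisyGram κ η x) t.isLt.le).det := by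
    rw [leadingBlock_noisyGram]
    exact (hdet t).isUnit
  calc (1 + (η ^ 2)⁻¹ • of fun p q => κ (x p) (x q)).det
      = (η ^ 2)⁻¹ ^ T * ∏ t, pivot (noisyGram κ η x) t := by
        rw [one_add_inv_smul_gram hη, det_smul, Fintype.card_fin, det_eq_prod_pivot _ isUnit_det]
    _ = ∏ t, (η ^ 2)⁻¹ * pivot (noisyGram κ η x) t := by
        rw [Finset.prod_mul_distrib, Finset.prod_const, Finset.card_fin]
    _ = _ := Finset.prod_congr rfl fun t _ => by
        rw [pivot_noisyGram, mul_add, inv_mul_cancel₀ (pow_ne_zero 2 hη)]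

theorem posDef_noisyGram (hη : η ≠ 0) (hx : (of fun p q => κ (x p) (x q)).PosSemidef) :
    (noisyGram κ η x).PosDef :=
  PosDef.posSemidef_add hx (PosDef.one.smul (by positivity))

end NoisyGram

theorem stmt_4_general {X : Type*} (κ : X → X → ℝ) {η : ℝ} (hη : η ≠ 0) {T : ℕ} (x : Fin T → X)
    (hdet : ∀ (t : ℕ) (ht : t ≤ T), 0 < (noisyGram κ η (Fin.take t ht x)).det) :
    (1 / 2) * Real.log ((1 + (η ^ 2)⁻¹ • of fun p q => κ (x p) (x q)).det)
      = (1 / 2) * ∑ t : Fin T,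
          Real.log (1 + (η ^ 2)⁻¹ * postVar κ η (Fin.take t t.isLt.le x) (x t)) := by
  have det_eq_prod := det_one_add_inv_smul_gram hη fun t => (hdet t t.isLt.le).ne'
  have det_ne_zero : (1 + (η ^ 2)⁻¹ • of fun p q => κ (x p) (x q)).det ≠ 0 := by
    rw [one_add_inv_smul_gram hη, det_smul]
    exact mul_ne_zero (by positivity) (hdet T le_rfl).ne'
  rw [det_eq_prod] at det_ne_zero ⊢
  rw [Real.log_prod (Finset.prod_ne_zero_iff.mp det_ne_zero)]

/-- The information gain telescopes: for any symmetric positive semidefinite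
kernel `κ`, noise level `η > 0` and points `x_1, …, x_T`,
`(1/2) log det(I + η⁻² K_T) = (1/2) ∑_{t=1}^T log(1 + η⁻² σ_{t−1}²(x_t))`,
where `σ_{t−1}²` is the posterior variance after the first `t − 1` points. -/
theorem stmt_4 {X : Type*} (κ : X → X → ℝ)
    (hsymm : ∀ u v, κ u v = κ v u)
    (hpsd : ∀ (n : ℕ) (p : Fin n → X),
      (Matrix.of fun s t => κ (p s) (p t)).PosSemidef)
    (η : ℝ) (hη : 0 < η) (T : ℕ) (x : Fin T → X) :
    (1 / 2) * Real.log
        ((1 + (η ^ 2)⁻¹ • Matrix.of fun p q => κ (x p) (x q)).det)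
      = (1 / 2) * ∑ t : Fin T,
          Real.log (1 + (η ^ 2)⁻¹ *
            postVar κ η (fun s : Fin t.val => x (Fin.castLE t.isLt.le s)) (x t)) :=
  stmt_4_general κ hη.ne' x fun _ _ => (posDef_noisyGram hη.ne' (hpsd _ _)).det_pos
end

section
/- Let κ be a symmetric positive semidefinite kernel on X with κ(x, x) ≤ 1 for all x, let η > 0, and let x_1, …, x_T ∈ X. Then Σ_{t=1}^T σ_{t−1}²(x_t) ≤ (2 / log(1 + η^{−2})) · (1/2) log det(I_T + η^{−2} K_T), i.e. the sum of the one-step posterior variances along any query sequence is at most 2 C₁ times the information gain of the sequence, where C₁ = 1/log(1 + η^{−2}). -/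
/-!
The variance `σ_{t-1}²(x_t) + η²` is the Schur complement of the leading block in `K_t + η² I`, so
`det (K_t + η² I) = det (K_{t-1} + η² I) * (η² + σ_{t-1}²(x_t))`. Iterating, the information gain is
`(1/2) ∑ log (1 + σ_{t-1}²(x_t) / η²)`. Since `0 ≤ σ_{t-1}²(x_t) ≤ κ(x_t, x_t)`, concavity of the
logarithm bounds each variance by a multiple of the corresponding summand.
-/

open Matrix

section LastSchurCompl

variable {n : ℕ}

/-- The Schur complement of the leading `n × n` block of an `(n + 1) × (n + 1)` matrix, as a scalar.
It is meaningful only if that block is invertible. -/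
noncomputable def lastSchurCompl {R : Type*} [CommRing R]
    (A : Matrix (Fin (n + 1)) (Fin (n + 1)) R) : R :=
  A (Fin.last n) (Fin.last n) -
    (fun j : Fin n => A (Fin.last n) j.castSucc) ⬝ᵥ
      ((A.submatrix Fin.castSucc Fin.castSucc)⁻¹ *ᵥ fun i : Fin n => A i.castSucc (Fin.last n))

theorem det_eq_det_mul_lastSchurCompl {R : Type*} [CommRing R]
    {A : Matrix (Fin (n + 1)) (Fin (n + 1)) R}
    (hA : IsUnit (A.submatrix Fin.castSucc Fin.castSucc)) :
    A.det = (A.submatrix Fin.castSucc Fin.castSucc).det * lastSchurCompl A := by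
  have := hA.invertible
  let B : Matrix (Fin n) (Fin 1) R := of fun i _ => A i.castSucc (Fin.last n)
  let C : Matrix (Fin 1) (Fin n) R := of fun _ j => A (Fin.last n) j.castSucc
  let D : Matrix (Fin 1) (Fin 1) R := of fun _ _ => A (Fin.last n) (Fin.last n)
  have hblocks : A.submatrix finSumFinEquiv finSumFinEquiv =
      fromBlocks (A.submatrix Fin.castSucc Fin.castSucc) B C D := by
    have hlast (i : Fin 1) : Fin.natAdd n i = Fin.last n := by ext; simp
    ext (i | i) (j | j) <;>
      simp only [submatrix_apply, finSumFinEquiv_apply_left, finSumFinEquiv_apply_right, hlast] <;>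
      rfl
  rw [← det_submatrix_equiv_self finSumFinEquiv, hblocks, det_fromBlocks₁₁, det_fin_one,
    invOf_eq_nonsing_inv, Matrix.mul_assoc]
  rfl

open scoped ComplexOrder

variable {𝕜 : Type*} [RCLike 𝕜] {A : Matrix (Fin (n + 1)) (Fin (n + 1)) 𝕜}

theorem lastSchurCompl_nonneg (hA : A.PosSemidef)
    (hlead : (A.submatrix Fin.castSucc Fin.castSucc).PosDef) : 0 ≤ lastSchurCompl A := by
  have hdet := hA.det_nonneg
  rw [det_eq_det_mul_lastSchurCompl hlead.isUnit] at hdet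
  exact le_of_mul_le_mul_left (by simpa only [mul_zero] using hdet) hlead.det_pos

theorem lastSchurCompl_le (hA : A.PosSemidef) :
    lastSchurCompl A ≤ A (Fin.last n) (Fin.last n) := by
  have hrow : (fun j : Fin n => A (Fin.last n) j.castSucc) =
      star fun i : Fin n => A i.castSucc (Fin.last n) :=
    funext fun j => (hA.isHermitian.apply (Fin.last n) j.castSucc).symm
  rw [lastSchurCompl, hrow]
  exact sub_le_self _ ((hA.submatrix Fin.castSucc).inv.dotProduct_mulVec_nonneg _)

end LastSchurCompl

/-- The kernel matrix `K` of a family of points. -/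
def kernelMatrix {X ι : Type*} (κ : X → X → ℝ) (x : ι → X) : Matrix ι ι ℝ :=
  of fun p q => κ (x p) (x q)

/-- The covariance matrix `K + diag v` of the observations when the point `x i` is observed with
noise variance `v i`. The noise may vary with the point so that the next query can be adjoined
noise-free to observations with noise variance `η²`. -/
def noisyKernelMatrix {X ι : Type*} [DecidableEq ι] (κ : X → X → ℝ) (x : ι → X) (v : ι → ℝ) :
    Matrix ι ι ℝ :=
  kernelMatrix κ x + diagonal v

/-- The information gain `(1/2) log det (I + η⁻² K)` of the points `x` at noise level `η`. -/
noncomputable def informationGain {X ι : Type*} [Fintype ι] [DecidableEq ι] (κ : X → X → ℝ)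
    (η : ℝ) (x : ι → X) : ℝ :=
  (1 / 2) * Real.log (1 + (η ^ 2)⁻¹ • kernelMatrix κ x).det

/-- The one-step posterior variance of the query `x t` given the queries before it. With the
zero-based index `t`, this is `σ_t²(x_{t+1})` in one-based notation. -/
noncomputable def stepVar {X : Type*} {T : ℕ} (κ : X → X → ℝ) (η : ℝ) (x : Fin T → X)
    (t : Fin T) : ℝ :=
  postVar κ η (fun s : Fin t.val => x (Fin.castLE t.isLt.le s)) (x t)

section StepVar

variable {X : Type*} {κ : X → X → ℝ} {η : ℝ} {n T : ℕ}

theorem submatrix_noisyKernelMatrix {ι ι' : Type*} [DecidableEq ι] [DecidableEq ι'] (x : ι → X)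
    (v : ι → ℝ) (e : ι' ↪ ι) :
    (noisyKernelMatrix κ x v).submatrix e e = noisyKernelMatrix κ (x ∘ e) (v ∘ e) := by
  rw [noisyKernelMatrix, submatrix_add, Pi.add_apply, Pi.add_apply, submatrix_diagonal_embedding]
  rfl

theorem noisyKernelMatrix_const {ι : Type*} [DecidableEq ι] (x : ι → X) (c : ℝ) :
    noisyKernelMatrix κ x (fun _ => c) = kernelMatrix κ x + c • (1 : Matrix ι ι ℝ) := by
  rw [noisyKernelMatrix, smul_one_eq_diagonal]

theorem posSemidef_noisyKernelMatrix {ι : Type*} [DecidableEq ι] {x : ι → X} {v : ι → ℝ}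
    (hK : (kernelMatrix κ x).PosSemidef) (hv : 0 ≤ v) : (noisyKernelMatrix κ x v).PosSemidef :=
  hK.add (PosSemidef.diagonal hv)

theorem posDef_noisyKernelMatrix {ι : Type*} [DecidableEq ι] {x : ι → X} {v : ι → ℝ}
    (hK : (kernelMatrix κ x).PosSemidef) (hv : ∀ i, 0 < v i) : (noisyKernelMatrix κ x v).PosDef :=
  PosDef.posSemidef_add hK (PosDef.diagonal hv)

theorem leadingBlock_noisyKernelMatrix_snoc (x : Fin (n + 1) → X) (c : ℝ) :
    (noisyKernelMatrix κ x (Fin.snoc (fun _ => η ^ 2) c)).submatrix Fin.castSucc Fin.castSucc =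
      noisyKernelMatrix κ (x ∘ Fin.castSucc) fun _ => η ^ 2 := by
  refine (submatrix_noisyKernelMatrix x _ Fin.castSuccEmb).trans ?_
  congr 1
  ext i
  simp

-- The noise `c` on the last point is left free: `c = 0` gives the bounds on the variance,
-- `c = η ^ 2` the determinant recursion.
theorem stepVar_last_add (x : Fin (n + 1) → X) (c : ℝ) :
    stepVar κ η x (Fin.last n) + c =
      lastSchurCompl (noisyKernelMatrix κ x (Fin.snoc (fun _ => η ^ 2) c)) := by
  set A := noisyKernelMatrix κ x (Fin.snoc (fun _ => η ^ 2) c) with hA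
  have hrow (j : Fin n) : A (Fin.last n) j.castSucc = κ (x (Fin.last n)) (x j.castSucc) := by
    simp [A, noisyKernelMatrix, kernelMatrix, (Fin.castSucc_ne_last j).symm]
  have hcol (i : Fin n) : A i.castSucc (Fin.last n) = κ (x i.castSucc) (x (Fin.last n)) := by
    simp [A, noisyKernelMatrix, kernelMatrix, Fin.castSucc_ne_last]
  have hcorner : A (Fin.last n) (Fin.last n) = κ (x (Fin.last n)) (x (Fin.last n)) + c := by
    simp [A, noisyKernelMatrix, kernelMatrix]
  simp only [lastSchurCompl, hrow, hcol, hcorner]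
  rw [hA, leadingBlock_noisyKernelMatrix_snoc, noisyKernelMatrix_const]
  exact sub_add_eq_add_sub _ _ _

theorem stepVar_eq_lastSchurCompl (x : Fin T → X) (t : Fin T) :
    stepVar κ η x t = lastSchurCompl
      (noisyKernelMatrix κ (x ∘ Fin.castLE t.isLt) (Fin.snoc (fun _ => η ^ 2) 0)) := by
  rw [← stepVar_last_add, add_zero]
  rfl

theorem posSemidef_noisyKernelMatrix_snoc_zero {x : Fin (n + 1) → X}
    (hK : (kernelMatrix κ x).PosSemidef) :
    (noisyKernelMatrix κ x (Fin.snoc (fun _ => η ^ 2) 0)).PosSemidef := by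
  refine posSemidef_noisyKernelMatrix hK fun i => ?_
  induction i using Fin.lastCases <;> simp [sq_nonneg]

theorem stepVar_nonneg {x : Fin T → X} (hη : η ≠ 0) (hK : (kernelMatrix κ x).PosSemidef)
    (t : Fin T) : 0 ≤ stepVar κ η x t := by
  have hKt := hK.submatrix (Fin.castLE t.isLt)
  rw [stepVar_eq_lastSchurCompl]
  refine lastSchurCompl_nonneg (posSemidef_noisyKernelMatrix_snoc_zero hKt) ?_
  rw [leadingBlock_noisyKernelMatrix_snoc]
  exact posDef_noisyKernelMatrix (hKt.submatrix Fin.castSucc) fun _ => by positivity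

theorem stepVar_le {x : Fin T → X} (hK : (kernelMatrix κ x).PosSemidef) (t : Fin T) :
    stepVar κ η x t ≤ κ (x t) (x t) := by
  have hKt := hK.submatrix (Fin.castLE t.isLt)
  have hcorner : noisyKernelMatrix κ (x ∘ Fin.castLE t.isLt) (Fin.snoc (fun _ => η ^ 2) 0)
      (Fin.last t) (Fin.last t) = κ (x t) (x t) := by
    rw [noisyKernelMatrix, Matrix.add_apply, diagonal_apply_eq, Fin.snoc_last, add_zero]
    rfl
  rw [stepVar_eq_lastSchurCompl, ← hcorner]
  exact lastSchurCompl_le (posSemidef_noisyKernelMatrix_snoc_zero hKt)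

theorem det_noisyKernelMatrix_succ {x : Fin (n + 1) → X} (hη : η ≠ 0)
    (hK : (kernelMatrix κ (x ∘ Fin.castSucc)).PosSemidef) :
    (noisyKernelMatrix κ x fun _ => η ^ 2).det =
      (noisyKernelMatrix κ (x ∘ Fin.castSucc) fun _ => η ^ 2).det *
        (stepVar κ η x (Fin.last n) + η ^ 2) := by
  have hnoise : (fun _ => η ^ 2 : Fin (n + 1) → ℝ) = Fin.snoc (fun _ => η ^ 2) (η ^ 2) := by
    ext i
    induction i using Fin.lastCases <;> simp
  have hunit : IsUnit (noisyKernelMatrix κ (x ∘ Fin.castSucc) fun _ => η ^ 2) :=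
    (posDef_noisyKernelMatrix hK fun _ => by positivity).isUnit
  rw [← leadingBlock_noisyKernelMatrix_snoc x (η ^ 2)] at hunit ⊢
  rw [stepVar_last_add, ← det_eq_det_mul_lastSchurCompl hunit, hnoise]

theorem det_noisyKernelMatrix {x : Fin T → X} (hη : η ≠ 0)
    (hK : (kernelMatrix κ x).PosSemidef) :
    (noisyKernelMatrix κ x fun _ => η ^ 2).det = ∏ t, (stepVar κ η x t + η ^ 2) := by
  induction T with
  | zero => simp
  | succ n ih =>
    have hK' : (kernelMatrix κ (x ∘ Fin.castSucc)).PosSemidef := hK.submatrix Fin.castSucc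
    rw [det_noisyKernelMatrix_succ hη hK', ih hK', Fin.prod_univ_castSucc]
    rfl

theorem det_one_add_smul_kernelMatrix {x : Fin T → X} (hη : η ≠ 0)
    (hK : (kernelMatrix κ x).PosSemidef) :
    (1 + (η ^ 2)⁻¹ • kernelMatrix κ x).det = ∏ t, (1 + stepVar κ η x t * (η ^ 2)⁻¹) := by
  have hscale : 1 + (η ^ 2)⁻¹ • kernelMatrix κ x =
      (η ^ 2)⁻¹ • noisyKernelMatrix κ x fun _ => η ^ 2 := by
    rw [noisyKernelMatrix_const, smul_add, inv_smul_smul₀ (pow_ne_zero 2 hη), add_comm]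
  rw [hscale, det_smul, det_noisyKernelMatrix hη hK, ← Finset.card_univ,
    Finset.pow_card_mul_prod]
  refine Finset.prod_congr rfl fun t _ => ?_
  field_simp
  ring

theorem informationGain_eq_sum_log_stepVar {x : Fin T → X} (hη : η ≠ 0)
    (hK : (kernelMatrix κ x).PosSemidef) :
    informationGain κ η x = (1 / 2) * ∑ t, Real.log (1 + stepVar κ η x t * (η ^ 2)⁻¹) := by
  rw [informationGain, det_one_add_smul_kernelMatrix hη hK, Real.log_prod]
  intro t _
  have := stepVar_nonneg hη hK t
  positivity

end StepVar

theorem le_div_log_mul_log_one_add_mul {a b s : ℝ} (ha : 0 < a) (hb : 0 < b) (hs : 0 ≤ s)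
    (hsb : s ≤ b) : s ≤ b / Real.log (1 + b * a) * Real.log (1 + s * a) := by
  have hlog : 0 < Real.log (1 + b * a) := Real.log_pos (by linarith [mul_pos hb ha])
  have bernoulli : (1 + b * a) ^ (s / b) ≤ 1 + s * a := by
    have h := rpow_one_add_le_one_add_mul_self (s := b * a) (by linarith [mul_pos hb ha])
      (div_nonneg hs hb.le) ((div_le_one hb).mpr hsb)
    rwa [← mul_assoc, div_mul_cancel₀ s hb.ne'] at h
  have hconcave : s / b * Real.log (1 + b * a) ≤ Real.log (1 + s * a) := by
    rw [← Real.log_rpow (by positivity)]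
    exact Real.log_le_log (by positivity) bernoulli
  calc s = b / Real.log (1 + b * a) * (s / b * Real.log (1 + b * a)) := by field_simp
    _ ≤ b / Real.log (1 + b * a) * Real.log (1 + s * a) := by gcongr

theorem stmt_5_general {X : Type*} {κ : X → X → ℝ} {η b : ℝ} {T : ℕ} {x : Fin T → X}
    (hK : (kernelMatrix κ x).PosSemidef) (hb : 0 < b) (hκ : ∀ t, κ (x t) (x t) ≤ b)
    (hη : η ≠ 0) :
    ∑ t, stepVar κ η x t ≤ 2 * b / Real.log (1 + b * (η ^ 2)⁻¹) * informationGain κ η x := by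
  calc ∑ t, stepVar κ η x t
      ≤ ∑ t, b / Real.log (1 + b * (η ^ 2)⁻¹) *
          Real.log (1 + stepVar κ η x t * (η ^ 2)⁻¹) :=
        Finset.sum_le_sum fun t _ => le_div_log_mul_log_one_add_mul (by positivity) hb
          (stepVar_nonneg hη hK t) ((stepVar_le hK t).trans (hκ t))
    _ = 2 * b / Real.log (1 + b * (η ^ 2)⁻¹) * informationGain κ η x := by
        rw [informationGain_eq_sum_log_stepVar hη hK, ← Finset.mul_sum]
        ring

/-- For a symmetric positive semidefinite kernel with `κ(x,x) ≤ 1`, the sum of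
the one-step posterior variances along any query sequence is at most
`2 C₁` times the information gain of the sequence, `C₁ = 1/log(1 + η⁻²)`. -/
theorem stmt_5 {X : Type*} (κ : X → X → ℝ)
    (hsymm : ∀ u v, κ u v = κ v u)
    (hpsd : ∀ (n : ℕ) (p : Fin n → X),
      (Matrix.of fun s t => κ (p s) (p t)).PosSemidef)
    (hbdd : ∀ u, κ u u ≤ 1)
    (η : ℝ) (hη : 0 < η) (T : ℕ) (x : Fin T → X) :
    ∑ t : Fin T, postVar κ η (fun s : Fin t.val => x (Fin.castLE t.isLt.le s)) (x t)
      ≤ (2 / Real.log (1 + (η ^ 2)⁻¹)) *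
          ((1 / 2) * Real.log
            ((1 + (η ^ 2)⁻¹ • Matrix.of fun p q => κ (x p) (x q)).det)) := by
  simpa only [mul_one, one_mul] using!
    stmt_5_general (hpsd T x) one_pos (fun t => hbdd (x t)) hη.ne'
end

section
/- Let κ be a symmetric positive semidefinite kernel on X, η > 0, and x_1, …, x_t ∈ X. Then for every x ∈ X, the Gaussian-process posterior variance is nonincreasing in the number of observations: σ_t²(x) ≤ σ_{t−1}²(x), where σ_{t−1}² is computed from the first t−1 points and σ_t² from all t points. -/
open Matrix

/-!
Let `M` be positive definite and `S` Hermitian with `S M S = S`. Then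
`M⁻¹ - S = (1 - M S)ᴴ M⁻¹ (1 - M S)`, so `S ≤ M⁻¹` in the Loewner order. This applies to
`S = V (Vᴴ M V)⁻¹ Vᴴ`. When `V` selects a set of coordinates, `Vᴴ M V` is a principal submatrix of
`M`, and evaluating at `b` shows that `bᴴ M⁻¹ b` can only decrease when `M` and `b` are restricted
to these coordinates. With `M = K + η² I` and `b = k(z)`, discarding observations therefore shrinks
the quantity subtracted from `κ(z, z)`.
-/

section Compression

variable {m n R : Type*} [Fintype n] [DecidableEq n]

theorem posSemidef_inv_sub_of_mul_mul_eq [CommRing R] [StarRing R] [PartialOrder R]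
    {M S : Matrix n n R} (hM : M.PosSemidef) (hMunit : IsUnit M) (hS : S.IsHermitian)
    (hSMS : S * M * S = S) : (M⁻¹ - S).PosSemidef := by
  have hMdet : IsUnit M.det := (isUnit_iff_isUnit_det M).1 hMunit
  have hfactor : M⁻¹ - S = (1 - M * S)ᴴ * M⁻¹ * (1 - M * S) := by
    symm
    calc (1 - M * S)ᴴ * M⁻¹ * (1 - M * S) = (1 - S * M) * M⁻¹ * (1 - M * S) := by
          rw [conjTranspose_sub, conjTranspose_one, conjTranspose_mul, hS.eq, hM.isHermitian.eq]
      _ = (M⁻¹ - S) * (1 - M * S) := by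
          rw [sub_mul, one_mul, mul_nonsing_inv_cancel_right M S hMdet]
      _ = M⁻¹ - S - (S - S * M * S) := by
          rw [mul_sub, mul_one, sub_mul, nonsing_inv_mul_cancel_left M S hMdet, Matrix.mul_assoc]
      _ = M⁻¹ - S := by rw [hSMS, sub_self, sub_zero]
  exact hfactor ▸ hM.inv.conjTranspose_mul_mul_same (1 - M * S)

theorem posSemidef_inv_sub_mul_inv_mul_conjTranspose [Fintype m] [DecidableEq m] [CommRing R]
    [StarRing R] [PartialOrder R] {M : Matrix n n R} (hM : M.PosSemidef) (hMunit : IsUnit M)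
    (V : Matrix n m R) (hVunit : IsUnit (Vᴴ * M * V)) :
    (M⁻¹ - V * (Vᴴ * M * V)⁻¹ * Vᴴ).PosSemidef := by
  refine posSemidef_inv_sub_of_mul_mul_eq hM hMunit
    (isHermitian_mul_mul_conjTranspose V (isHermitian_conjTranspose_mul_mul V hM.isHermitian).inv)
    ?_
  set N := Vᴴ * M * V with hN
  calc V * N⁻¹ * Vᴴ * M * (V * N⁻¹ * Vᴴ) = V * (N⁻¹ * N * N⁻¹) * Vᴴ := by
        simp only [hN, Matrix.mul_assoc]
    _ = V * N⁻¹ * Vᴴ := by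
        rw [nonsing_inv_mul N ((isUnit_iff_isUnit_det N).1 hVunit), Matrix.one_mul]

theorem conjTranspose_submatrix_one_mul_mul [NonAssocSemiring R] [StarRing R]
    (M : Matrix n n R) (e : m → n) :
    ((1 : Matrix n n R).submatrix id e)ᴴ * M * (1 : Matrix n n R).submatrix id e =
      M.submatrix e e := by
  have hrows : (1 : Matrix n n R).submatrix e id * M = M.submatrix e id :=
    one_submatrix_mul e (Equiv.refl n) M
  rw [conjTranspose_submatrix, conjTranspose_one, hrows]
  exact mul_submatrix_one (Equiv.refl n) e (M.submatrix e id)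

theorem conjTranspose_submatrix_one_mulVec [NonAssocSemiring R] [StarRing R]
    (e : m → n) (b : n → R) : ((1 : Matrix n n R).submatrix id e)ᴴ *ᵥ b = b ∘ e := by
  calc ((1 : Matrix n n R).submatrix id e)ᴴ *ᵥ b = (1 : Matrix n n R).submatrix e id *ᵥ b := by
        rw [conjTranspose_submatrix, conjTranspose_one]
    _ = ((1 : Matrix n n R) *ᵥ b) ∘ e := submatrix_mulVec_equiv 1 b e (Equiv.refl n)
    _ = b ∘ e := by rw [one_mulVec]

theorem dotProduct_submatrix_inv_mulVec_le [Fintype m] [DecidableEq m] [Field R] [StarRing R]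
    [PartialOrder R] [IsOrderedAddMonoid R] {M : Matrix n n R} (hM : M.PosDef) {e : m → n}
    (he : Function.Injective e) (b : n → R) :
    star (b ∘ e) ⬝ᵥ ((M.submatrix e e)⁻¹ *ᵥ (b ∘ e)) ≤ star b ⬝ᵥ (M⁻¹ *ᵥ b) := by
  set V := (1 : Matrix n n R).submatrix id e
  have hVM : Vᴴ * M * V = M.submatrix e e := conjTranspose_submatrix_one_mul_mul M e
  have hVb : Vᴴ *ᵥ b = b ∘ e := conjTranspose_submatrix_one_mulVec e b
  have hbV : star b ᵥ* V = star (b ∘ e) := by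
    rw [← hVb, star_mulVec, conjTranspose_conjTranspose]
  have hnonneg := (posSemidef_inv_sub_mul_inv_mul_conjTranspose hM.posSemidef hM.isUnit V
    (hVM ▸ (hM.submatrix he).isUnit)).dotProduct_mulVec_nonneg b
  rwa [hVM, sub_mulVec, dotProduct_sub, sub_nonneg, ← mulVec_mulVec, ← mulVec_mulVec, hVb,
    dotProduct_mulVec _ V, hbV] at hnonneg

end Compression

theorem stmt_7_general {X : Type*} {κ : X → X → ℝ} (hsymm : ∀ u v, κ u v = κ v u)
    {η : ℝ} (hη : η ≠ 0) {s t : ℕ} {x : Fin t → X}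
    (hx : (Matrix.of fun p q => κ (x p) (x q)).PosSemidef)
    {e : Fin s → Fin t} (he : Function.Injective e) (z : X) :
    postVar κ η x z ≤ postVar κ η (x ∘ e) z := by
  set M := (Matrix.of fun p q => κ (x p) (x q)) + η ^ 2 • (1 : Matrix (Fin t) (Fin t) ℝ)
  have hMpos : M.PosDef := PosDef.posSemidef_add hx (PosDef.one.smul (by positivity))
  have hMsub : M.submatrix e e = (Matrix.of fun p q => κ (x (e p)) (x (e q))) +
      η ^ 2 • (1 : Matrix (Fin s) (Fin s) ℝ) := by
    rw [← submatrix_one e he]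
    rfl
  have hle := dotProduct_submatrix_inv_mulVec_le hMpos he fun p => κ z (x p)
  simp only [hMsub, star_trivial] at hle
  simp only [postVar, hsymm _ z]
  exact sub_le_sub_left hle _

/-- The Gaussian-process posterior variance is nonincreasing in the number of
observations: conditioning on one extra point can only decrease the posterior
variance at every `z`. -/
theorem stmt_7 {X : Type*} (κ : X → X → ℝ)
    (hsymm : ∀ u v, κ u v = κ v u)
    (hpsd : ∀ (n : ℕ) (p : Fin n → X),
      (Matrix.of fun s t => κ (p s) (p t)).PosSemidef)
    (η : ℝ) (hη : 0 < η) (t : ℕ) (x : Fin (t + 1) → X) (z : X) :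
    postVar κ η x z ≤ postVar κ η (fun s : Fin t => x s.castSucc) z :=
  stmt_7_general hsymm hη.ne' (hpsd (t + 1) x) (Fin.castSucc_injective t) z
end

section
/- Let κ^{(1)}, …, κ^{(M)} be symmetric positive semidefinite kernels on a set X, let κ = Σ_j κ^{(j)}, let x_1, …, x_n ∈ X, η > 0, and Δ = K + η² I_n where K_{pq} = κ(x_p, x_q). Then for every j and every z ∈ X, the component posterior variance is nonnegative: κ^{(j)}(z, z) − k_j(z)^T Δ^{−1} k_j(z) ≥ 0, where k_j(z) ∈ ℝ^n has entries κ^{(j)}(z, x_p). (This shows the conditional variance of the component f^{(j)}(z) given the noisy observations of the additive process, as in Equation (1), is well defined.) -/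
open Matrix

/-!
Enlarging the lower right block `K(x, x)` of the positive semidefinite matrix
`[K(z, z), K(z, x); K(x, z), K(x, x)]` by a positive semidefinite matrix preserves positive
semidefiniteness. For one component of an additive kernel, the Gram matrices of the remaining
components together with the noise covariance are such an enlargement, and the posterior covariance
is the Schur complement of the enlarged block.
-/

section PosteriorCovariance

variable {X m : Type*}

theorem posSemidef_of_forall_fin_submatrix {R : Type*} [Ring R] [PartialOrder R] [StarRing R]
    {K : Matrix X X R} (h : ∀ (n : ℕ) (p : Fin n → X), (K.submatrix p p).PosSemidef) :
    K.PosSemidef := by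
  refine ⟨IsHermitian.ext fun u v => (h 2 ![u, v]).isHermitian.apply 0 1, fun c => ?_⟩
  let p : Fin c.support.card → X := fun i => c.support.equivFin.symm i
  have p_injective : p.Injective :=
    Subtype.val_injective.comp c.support.equivFin.symm.injective
  have support_subset : (c.support : Set X) ⊆ Set.range p := fun u hu =>
    ⟨c.support.equivFin ⟨u, hu⟩, by simp only [p, Equiv.symm_apply_apply]⟩
  rw [← Finsupp.mapDomain_comapDomain p p_injective c support_subset]
  simpa [Finsupp.sum_mapDomain_index, add_mul, mul_add] using
    (h _ p).2 (c.comapDomain p p_injective.injOn)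

theorem posSemidef_fromBlocks_zero_zero {l R : Type*} [Ring R] [PartialOrder R] [StarRing R]
    [AddLeftMono R] {A : Matrix l l R} {D : Matrix m m R} (hA : A.PosSemidef)
    (hD : D.PosSemidef) : (fromBlocks A 0 0 D).PosSemidef := by
  refine ⟨hA.isHermitian.fromBlocks conjTranspose_zero hD.isHermitian, fun c => ?_⟩
  obtain ⟨⟨a, d⟩, rfl⟩ := Finsupp.sumFinsuppEquivProdFinsupp.symm.surjective c
  simpa [Finsupp.sumFinsuppEquivProdFinsupp, Finsupp.sum_sumElim, Function.comp_def] using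
    add_nonneg (hA.2 a) (hD.2 d)

theorem sum_of_submatrix {ι R : Type*} [Fintype ι] [AddCommMonoid R] (κ : ι → X → X → R)
    (x : m → X) :
    (∑ i, of (κ i)).submatrix x x = of fun p q => ∑ i, κ i (x p) (x q) := by
  ext p q
  simp only [of_apply, submatrix_apply, Matrix.sum_apply]

variable {𝕜 : Type*} [Field 𝕜] [Fintype m] [DecidableEq m]

/-- The posterior covariance `K(z, w) - K(z, x) D⁻¹ K(x, w)` of a process with prior covariance
kernel `K`, given observations at the points `x` with covariance matrix `D`: the process at `x` plus
independent components and noise. Kernels on `X` are encoded as matrices indexed by `X`. For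
singular `D` the convention `D⁻¹ = 0` makes this the prior `K`. -/
noncomputable def posteriorCov (K : Matrix X X 𝕜) (x : m → X) (D : Matrix m m 𝕜) :
    Matrix X X 𝕜 :=
  .of fun z w => K z w - (fun p => K z (x p)) ⬝ᵥ (D⁻¹ *ᵥ fun p => K (x p) w)

theorem posteriorCov_submatrix {l : Type*} (K : Matrix X X 𝕜) (x : m → X) (D : Matrix m m 𝕜)
    (z : l → X) :
    (posteriorCov K x D).submatrix z z =
      K.submatrix z z - K.submatrix z x * D⁻¹ * K.submatrix x z := by
  rw [Matrix.mul_assoc]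
  rfl

variable [PartialOrder 𝕜] [StarRing 𝕜] [StarOrderedRing 𝕜]

theorem posSemidef_posteriorCov {K : Matrix X X 𝕜} (hK : K.PosSemidef) {x : m → X}
    {D : Matrix m m 𝕜} (hD : D.PosDef) (hKD : (D - K.submatrix x x).PosSemidef) :
    (posteriorCov K x D).PosSemidef := by
  refine posSemidef_of_forall_fin_submatrix fun n z => ?_
  have conjTranspose_cross : (K.submatrix z x)ᴴ = K.submatrix x z := by
    rw [conjTranspose_submatrix, hK.isHermitian.eq]
  have joint_eq : fromBlocks (K.submatrix z z) (K.submatrix z x) (K.submatrix z x)ᴴ D =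
      K.submatrix (Sum.elim z x) (Sum.elim z x) +
        fromBlocks 0 0 0 (D - K.submatrix x x) := by
    rw [conjTranspose_cross]
    ext (i | i) (k | k) <;> simp
  have joint_posSemidef :
      (fromBlocks (K.submatrix z z) (K.submatrix z x) (K.submatrix z x)ᴴ D).PosSemidef :=
    joint_eq ▸ (hK.submatrix _).add (posSemidef_fromBlocks_zero_zero .zero hKD)
  have := hD.isUnit.invertible
  rw [posteriorCov_submatrix, ← conjTranspose_cross]
  exact (hD.fromBlocks₂₂ _ _).mp joint_posSemidef

theorem stmt_8_general {ι : Type*} [Fintype ι] {K : ι → Matrix X X 𝕜}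
    (hK : ∀ i, (K i).PosSemidef) (x : m → X) {N : Matrix m m 𝕜} (hN : N.PosDef) (j : ι) :
    (posteriorCov (K j) x ((∑ i, K i).submatrix x x + N)).PosSemidef := by
  classical
  refine posSemidef_posteriorCov (hK j)
    (hN.posSemidef_add ((posSemidef_sum _ fun i _ => hK i).submatrix x)) ?_
  have rest_eq : (∑ i, K i).submatrix x x + N - (K j).submatrix x x =
      (∑ i ∈ Finset.univ.erase j, K i).submatrix x x + N := by
    rw [← Finset.add_sum_erase _ _ (Finset.mem_univ j), submatrix_add]
    simp only [Pi.add_apply]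
    abel
  rw [rest_eq]
  exact ((posSemidef_sum _ fun i _ => hK i).submatrix x).add hN.posSemidef

end PosteriorCovariance

/-- For an additive kernel `κ = ∑ⱼ κ⁽ʲ⁾` built from symmetric positive
semidefinite kernels, the posterior variance of each component,
`κ⁽ʲ⁾(z,z) − kⱼ(z)ᵀ (K + η² I)⁻¹ kⱼ(z)` with `K` the Gram matrix of the full
additive kernel, is nonnegative. -/
theorem stmt_8 {X : Type*} (M : ℕ) (κ : Fin M → X → X → ℝ)
    (hsymm : ∀ j u v, κ j u v = κ j v u)
    (hpsd : ∀ (j : Fin M) (n : ℕ) (p : Fin n → X),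
      (Matrix.of fun s t => κ j (p s) (p t)).PosSemidef)
    (n : ℕ) (x : Fin n → X) (η : ℝ) (hη : 0 < η) (j : Fin M) (z : X) :
    0 ≤ κ j z z -
        (fun p => κ j z (x p)) ⬝ᵥ
          (((Matrix.of fun p q => ∑ i, κ i (x p) (x q)) +
              η ^ 2 • (1 : Matrix (Fin n) (Fin n) ℝ))⁻¹ *ᵥ fun p => κ j (x p) z) := by
  rw [← sum_of_submatrix]
  exact (stmt_8_general (fun i => posSemidef_of_forall_fin_submatrix (hpsd i)) x
    (PosDef.one.smul (pow_pos hη 2)) j).diag_nonneg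
end
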